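/- (Impulsive jump estimate, inequality (22), single-cluster form) Let Q be a real symmetric positive definite n×n matrix, let m ≥ 1 and 0 ≤ ρ < m be integers, let d ∈ (−2, 0), let e_1, …, e_m ∈ ℝ^n, and let S ⊆ {1,…,m} with |S| = ρ be such that ‖e_i‖ ≥ ‖e_j‖ whenever i ∈ S and j ∉ S. Then (1+d)² Σ_{i ∈ S} e_iᵀ Q e_i + Σ_{j ∉ S} e_jᵀ Q e_j ≤ η Σ_{i=1}^m e_iᵀ Q e_i, where η = (1+d)² − d(2+d) · λmax(Q)(m−ρ)/(λmin(Q) m). -/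

import Mathlib

open Matrix

/-- The largest eigenvalue of a real symmetric matrix, characterized as the
supremum of the Rayleigh quotient over the Euclidean unit sphere. -/
noncomputable def lamMax {k : ℕ} (A : Matrix (Fin k) (Fin k) ℝ) : ℝ :=
  sSup {r : ℝ | ∃ x : EuclideanSpace ℝ (Fin k), ‖x‖ = 1 ∧ r = x ⬝ᵥ A.mulVec x}

/-- The smallest eigenvalue of a real symmetric matrix, characterized as the
infimum of the Rayleigh quotient over the Euclidean unit sphere. -/
noncomputable def lamMin {k : ℕ} (A : Matrix (Fin k) (Fin k) ℝ) : ℝ :=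
  sInf {r : ℝ | ∃ x : EuclideanSpace ℝ (Fin k), ‖x‖ = 1 ∧ r = x ⬝ᵥ A.mulVec x}

/-!
The pinned vectors have the largest norms, so the average of `‖e j‖ ^ 2` over the unpinned indices
is at most the average over all indices. As `xᵀ Q x` lies between `λmin ‖x‖ ^ 2` and
`λmax ‖x‖ ^ 2`, passing from squared norms to the quadratic form costs a factor `λmax / λmin`.
The estimate follows because the impulse lowers the total `T` to `(1 + d) ^ 2 T - d (2 + d) U`,
where `U` is the unpinned part of `T` and `-d (2 + d) ≥ 0`.
-/

section Rayleigh

variable {ι : Type*} [Fintype ι] (A : Matrix ι ι ℝ)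

/-- The values of the quadratic form `x ↦ xᵀ A x` on the Euclidean unit sphere, that is, the
Rayleigh quotients of `A`; `lamMax A` and `lamMin A` are its supremum and infimum. -/
def rayleighValues : Set ℝ :=
  (fun x : EuclideanSpace ℝ ι ↦ x ⬝ᵥ A *ᵥ x) '' Metric.sphere 0 1

theorem rayleighValues_eq_setOf :
    rayleighValues A = {r | ∃ x : EuclideanSpace ℝ ι, ‖x‖ = 1 ∧ r = x ⬝ᵥ A *ᵥ x} := by
  simp only [rayleighValues, Set.image, mem_sphere_zero_iff_norm, eq_comm]

theorem isCompact_rayleighValues : IsCompact (rayleighValues A) := by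
  refine (isCompact_sphere _ _).image ?_
  simp only [dotProduct, mulVec]
  fun_prop

theorem rayleighValues_nonempty [Nonempty ι] : (rayleighValues A).Nonempty :=
  (NormedSpace.sphere_nonempty.mpr zero_le_one).image _

variable {A}

theorem dotProduct_mulVec_div_norm_sq_mem_rayleighValues {x : EuclideanSpace ℝ ι}
    (hx : x ≠ 0) : x ⬝ᵥ A *ᵥ x / ‖x‖ ^ 2 ∈ rayleighValues A := by
  have hnorm : ‖x‖ ≠ 0 := norm_ne_zero_iff.mpr hx
  refine ⟨‖x‖⁻¹ • x, ?_, ?_⟩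
  · rw [mem_sphere_zero_iff_norm, norm_smul, norm_inv, norm_norm, inv_mul_cancel₀ hnorm]
  · simp only [WithLp.ofLp_smul, mulVec_smul, dotProduct_smul, smul_dotProduct, smul_eq_mul]
    field_simp

end Rayleigh

section ExtremeEigenvalues

variable {n : ℕ} (A : Matrix (Fin n) (Fin n) ℝ)

theorem lamMax_eq_sSup_rayleighValues : lamMax A = sSup (rayleighValues A) := by
  rw [rayleighValues_eq_setOf, lamMax]

theorem lamMin_eq_sInf_rayleighValues : lamMin A = sInf (rayleighValues A) := by
  rw [rayleighValues_eq_setOf, lamMin]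

theorem dotProduct_mulVec_le_lamMax_mul_norm_sq (x : EuclideanSpace ℝ (Fin n)) :
    x ⬝ᵥ A *ᵥ x ≤ lamMax A * ‖x‖ ^ 2 := by
  rcases eq_or_ne x 0 with rfl | hx
  · simp
  rw [← div_le_iff₀ (by positivity), lamMax_eq_sSup_rayleighValues]
  exact le_csSup (isCompact_rayleighValues A).bddAbove
    (dotProduct_mulVec_div_norm_sq_mem_rayleighValues hx)

theorem lamMin_mul_norm_sq_le_dotProduct_mulVec (x : EuclideanSpace ℝ (Fin n)) :
    lamMin A * ‖x‖ ^ 2 ≤ x ⬝ᵥ A *ᵥ x := by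
  rcases eq_or_ne x 0 with rfl | hx
  · simp
  rw [← le_div_iff₀ (by positivity), lamMin_eq_sInf_rayleighValues]
  exact csInf_le (isCompact_rayleighValues A).bddBelow
    (dotProduct_mulVec_div_norm_sq_mem_rayleighValues hx)

theorem lamMin_le_lamMax : lamMin A ≤ lamMax A := by
  rw [lamMin_eq_sInf_rayleighValues, lamMax_eq_sSup_rayleighValues]
  exact Real.sInf_le_sSup _ (isCompact_rayleighValues A).bddBelow
    (isCompact_rayleighValues A).bddAbove

variable {A}

theorem lamMin_pos [NeZero n] (hA : ∀ x : EuclideanSpace ℝ (Fin n), x ≠ 0 → 0 < x ⬝ᵥ A *ᵥ x) :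
    0 < lamMin A := by
  obtain ⟨x, hx, hmin⟩ := (isCompact_rayleighValues A).sInf_mem (rayleighValues_nonempty A)
  rw [lamMin_eq_sInf_rayleighValues, ← hmin]
  exact hA x (ne_zero_of_mem_unit_sphere ⟨x, hx⟩)

end ExtremeEigenvalues

section PinnedSubset

open Finset

variable {ι : Type*} [Fintype ι] [DecidableEq ι] {S : Finset ι}

theorem card_nsmul_sum_compl_le_card_compl_nsmul_sum {M : Type*} [AddCommMonoid M] [PartialOrder M]
    [IsOrderedAddMonoid M] {a : ι → M} (ha : ∀ i ∈ S, ∀ j ∉ S, a j ≤ a i) :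
    Fintype.card ι • ∑ j ∈ Sᶜ, a j ≤ #Sᶜ • ∑ i, a i := by
  have hexchange : #S • ∑ j ∈ Sᶜ, a j ≤ #Sᶜ • ∑ i ∈ S, a i := by
    rw [← sum_const, ← sum_nsmul]
    refine sum_le_sum fun i hi ↦ sum_le_card_nsmul _ _ _ fun j hj ↦ ?_
    exact ha i hi j (mem_compl.mp hj)
  rw [← card_add_card_compl S, add_nsmul, ← sum_add_sum_compl S, nsmul_add]
  gcongr

theorem sum_compl_le_div_mul_sum {K : Type*} [Field K] [LinearOrder K] [IsStrictOrderedRing K]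
    {w f : ι → K} {c C : K} (hc : 0 < c) (hC : 0 ≤ C)
    (hw : ∀ i ∈ S, ∀ j ∉ S, w j ≤ w i) (hlow : ∀ i, c * w i ≤ f i) (hupp : ∀ i, f i ≤ C * w i) :
    ∑ j ∈ Sᶜ, f j ≤ C * #Sᶜ / (c * Fintype.card ι) * ∑ i, f i := by
  cases isEmpty_or_nonempty ι
  · simp [eq_empty_of_isEmpty Sᶜ]
  have hcard : (0 : K) < Fintype.card ι := mod_cast Fintype.card_pos
  have havg : Fintype.card ι * ∑ j ∈ Sᶜ, w j ≤ #Sᶜ * ∑ i, w i := by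
    simpa only [nsmul_eq_mul] using card_nsmul_sum_compl_le_card_compl_nsmul_sum hw
  rw [div_mul_eq_mul_div, le_div_iff₀ (mul_pos hc hcard)]
  calc (∑ j ∈ Sᶜ, f j) * (c * Fintype.card ι)
      ≤ (∑ j ∈ Sᶜ, C * w j) * (c * Fintype.card ι) := by gcongr; exact hupp _
    _ = C * c * (Fintype.card ι * ∑ j ∈ Sᶜ, w j) := by rw [← mul_sum]; ring
    _ ≤ C * c * (#Sᶜ * ∑ i, w i) := by gcongr
    _ = C * #Sᶜ * ∑ i, c * w i := by rw [← mul_sum]; ring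
    _ ≤ C * #Sᶜ * ∑ i, f i := by gcongr; exact hlow _

theorem sum_compl_dotProduct_mulVec_le {n : ℕ} {Q : Matrix (Fin n) (Fin n) ℝ}
    (hQ : ∀ x : EuclideanSpace ℝ (Fin n), x ≠ 0 → 0 < x ⬝ᵥ Q *ᵥ x)
    {e : ι → EuclideanSpace ℝ (Fin n)} (hS : ∀ i ∈ S, ∀ j ∉ S, ‖e j‖ ≤ ‖e i‖) :
    ∑ j ∈ Sᶜ, e j ⬝ᵥ Q *ᵥ e j
      ≤ lamMax Q * #Sᶜ / (lamMin Q * Fintype.card ι) * ∑ i, e i ⬝ᵥ Q *ᵥ e i := by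
  rcases eq_zero_or_neZero n with rfl | _
  · simp
  have hmin : 0 < lamMin Q := lamMin_pos hQ
  exact sum_compl_le_div_mul_sum hmin (hmin.le.trans (lamMin_le_lamMax Q))
    (fun i hi j hj ↦ pow_le_pow_left₀ (norm_nonneg _) (hS i hi j hj) 2)
    (fun i ↦ lamMin_mul_norm_sq_le_dotProduct_mulVec Q (e i))
    (fun i ↦ dotProduct_mulVec_le_lamMax_mul_norm_sq Q (e i))

theorem impulsive_jump_estimate_general {n : ℕ} (Q : Matrix (Fin n) (Fin n) ℝ)
    (hQ : ∀ x : EuclideanSpace ℝ (Fin n), x ≠ 0 → 0 < x ⬝ᵥ Q *ᵥ x)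
    {d : ℝ} (hd : d ∈ Set.Icc (-2) 0) (e : ι → EuclideanSpace ℝ (Fin n))
    (hS : ∀ i ∈ S, ∀ j ∉ S, ‖e j‖ ≤ ‖e i‖) :
    (1 + d) ^ 2 * ∑ i ∈ S, e i ⬝ᵥ Q *ᵥ e i + ∑ j ∈ Sᶜ, e j ⬝ᵥ Q *ᵥ e j
      ≤ ((1 + d) ^ 2 - d * (2 + d) * (lamMax Q * #Sᶜ) / (lamMin Q * Fintype.card ι))
          * ∑ i, e i ⬝ᵥ Q *ᵥ e i := by
  have hweight : 0 ≤ -d * (2 + d) := mul_nonneg (by linarith [hd.2]) (by linarith [hd.1])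
  calc (1 + d) ^ 2 * ∑ i ∈ S, e i ⬝ᵥ Q *ᵥ e i + ∑ j ∈ Sᶜ, e j ⬝ᵥ Q *ᵥ e j
      = (1 + d) ^ 2 * ∑ i, e i ⬝ᵥ Q *ᵥ e i + -d * (2 + d) * ∑ j ∈ Sᶜ, e j ⬝ᵥ Q *ᵥ e j := by
        rw [← sum_add_sum_compl S]; ring
    _ ≤ (1 + d) ^ 2 * ∑ i, e i ⬝ᵥ Q *ᵥ e i + -d * (2 + d) *
          (lamMax Q * #Sᶜ / (lamMin Q * Fintype.card ι) * ∑ i, e i ⬝ᵥ Q *ᵥ e i) := by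
        gcongr
        exact sum_compl_dotProduct_mulVec_le hQ hS
    _ = _ := by ring

end PinnedSubset

/-- **Impulsive jump estimate (inequality (22), single cluster).** If `Q` is symmetric
positive definite, `d ∈ (−2, 0)`, and `S` consists of `ρ` vectors with the largest norms
among `e₁, …, e_m ∈ ℝⁿ` (`0 ≤ ρ < m`), then
`(1+d)² Σ_{i∈S} eᵢᵀ Q eᵢ + Σ_{j∉S} eⱼᵀ Q eⱼ ≤ η Σᵢ eᵢᵀ Q eᵢ`, where
`η = (1+d)² − d(2+d) λmax(Q)(m−ρ)/(λmin(Q) m)`. -/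
theorem impulsive_jump_estimate {n m ρ : ℕ} (hm : 1 ≤ m) (hρ : ρ < m)
    (Q : Matrix (Fin n) (Fin n) ℝ) (hQ : Q.PosDef)
    (d : ℝ) (hd1 : -2 < d) (hd2 : d < 0)
    (e : Fin m → EuclideanSpace ℝ (Fin n))
    (S : Finset (Fin m)) (hcard : S.card = ρ)
    (hS : ∀ i ∈ S, ∀ j ∉ S, ‖e j‖ ≤ ‖e i‖) :
    (1 + d) ^ 2 * ∑ i ∈ S, e i ⬝ᵥ Q.mulVec (e i) + ∑ j ∈ Sᶜ, e j ⬝ᵥ Q.mulVec (e j)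
      ≤ ((1 + d) ^ 2 - d * (2 + d) * (lamMax Q * ((m : ℝ) - ρ)) / (lamMin Q * m))
          * ∑ i, e i ⬝ᵥ Q.mulVec (e i) := by
  have hpos (x : EuclideanSpace ℝ (Fin n)) (hx : x ≠ 0) : 0 < x ⬝ᵥ Q *ᵥ x := by
    simpa using hQ.dotProduct_mulVec_pos ((WithLp.ofLp_eq_zero 2).not.mpr hx)
  simpa [Finset.card_compl, hcard, hρ.le] using
    impulsive_jump_estimate_general Q hpos ⟨hd1.le, hd2.le⟩ e hS
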